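/- arXiv:2207.06980 — 3 statements merged into one kernel-verified Lean document; each statement's English description precedes it below -/
import Mathlib

section
/- Let α, β₁, β₂ be intuitionistic fuzzy values with α ⊊ β₁ ⊊ β₂ in Atanassov's order (i.e., α ⊂ β₁ ⊂ β₂ and α ≠ β₁, β₁ ≠ β₂). Then Z(α, β₁) < Z(α, β₂), and consequently JS(α, β₁) < JS(α, β₂). -/
/-- `L p q = p·log₂(2p/(p+q)) + q·log₂(2q/(p+q))`, with Lean's conventions
`0 * log₂ _ = 0` and `x / 0 = 0`, `log₂ 0 = 0` implementing `0·log 0 = 0`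
and `0·log(0/0) = 0`. -/
noncomputable def L (p q : ℝ) : ℝ :=
  p * Real.logb 2 (2 * p / (p + q)) + q * Real.logb 2 (2 * q / (p + q))

/-- An intuitionistic fuzzy value: a pair `⟨μ, ν⟩` with `0 ≤ μ`, `0 ≤ ν`,
`μ + ν ≤ 1` (hence also `μ ≤ 1` and `ν ≤ 1`). -/
@[ext]
structure IFV where
  mu : ℝ
  nu : ℝ
  mu_nonneg : 0 ≤ mu
  nu_nonneg : 0 ≤ nu
  sum_le : mu + nu ≤ 1

/-- `Z(α,β) = L(1−μ_α, 1−μ_β) + L(ν_α, ν_β)`. -/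
noncomputable def Z (a b : IFV) : ℝ := L (1 - a.mu) (1 - b.mu) + L a.nu b.nu

/-- The normalized Jensen–Shannon IF divergence `JS(α,β) = √(Z(α,β)/2)`. -/
noncomputable def JS (a b : IFV) : ℝ := Real.sqrt (Z a b / 2)

/-- Atanassov's order: `α ⊂ β` iff `μ_α ≤ μ_β` and `ν_α ≥ ν_β`. -/
def IFV.sub (a b : IFV) : Prop := a.mu ≤ b.mu ∧ b.nu ≤ a.nu

/-- Strict Atanassov order: `α ⊊ β` iff `α ⊂ β` and `α ≠ β`. -/
def IFV.ssub (a b : IFV) : Prop := a.sub b ∧ a ≠ b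

/-- The IFV `⟨1, 0⟩`. -/
def IFV.posOne : IFV := ⟨1, 0, by norm_num, le_rfl, by norm_num⟩

/-- The IFV `⟨0, 1⟩`. -/
def IFV.negOne : IFV := ⟨0, 1, le_rfl, by norm_num, by norm_num⟩

/-!
For a fixed first argument `p`, the derivative of `L p` at `q` is `log₂ (2q / (p + q))`, which is
negative for `0 < q < p`; hence `L p` strictly decreases on `[0, p]`, down to `L p p = 0`.
If `α ⊂ β`, then `1 - μ_β ∈ [0, 1 - μ_α]` and `ν_β ∈ [0, ν_α]`. Enlarging `β` therefore moves both
second arguments in `Z(α, β)` away from the first ones, and a strict enlargement moves at least one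
of them strictly.
-/

open Real Set

lemma mul_logb_two_mul_div (p : ℝ) {s : ℝ} (hs : s ≠ 0) :
    p * logb 2 (2 * p / s) = (p * log p - p * log s) / log 2 + p := by
  rcases eq_or_ne p 0 with rfl | hp
  · simp
  · have hlog : log 2 ≠ 0 := (log_pos one_lt_two).ne'
    rw [logb, log_div (mul_ne_zero two_ne_zero hp) hs, log_mul two_ne_zero hp]
    field_simp
    ring

lemma L_comm (p q : ℝ) : L p q = L q p := by
  rw [L, L, add_comm q p, add_comm]

lemma L_self (p : ℝ) : L p p = 0 := by
  rcases eq_or_ne p 0 with rfl | hp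
  · simp [L]
  · simp [L, ← two_mul, hp]

lemma L_eq_negMulLog (p q : ℝ) :
    L p q = (negMulLog (p + q) - negMulLog p - negMulLog q) / log 2 + (p + q) := by
  rcases eq_or_ne (p + q) 0 with h | h
  · -- Both sides are `0`: on the left by `x / 0 = 0`, on the right because `log (-p) = log p`.
    obtain rfl : q = -p := by linarith
    simp [L, negMulLog]
  · rw [L, mul_logb_two_mul_div p h, mul_logb_two_mul_div q h]
    simp only [negMulLog]
    ring

lemma continuous_L_right (p : ℝ) : Continuous (L p) := by
  rw [funext (L_eq_negMulLog p)]
  fun_prop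

lemma hasDerivAt_L_right {p q : ℝ} (hq : q ≠ 0) (hpq : p + q ≠ 0) :
    HasDerivAt (L p) (logb 2 (2 * q / (p + q))) q := by
  have hlog : log 2 ≠ 0 := (log_pos one_lt_two).ne'
  have hsum : HasDerivAt (fun x ↦ negMulLog (p + x)) (-log (p + q) - 1) q :=
    (hasDerivAt_negMulLog hpq).comp_const_add p q
  have hentropy := ((hsum.sub_const (negMulLog p)).sub (hasDerivAt_negMulLog hq)).div_const (log 2)
  rw [funext (L_eq_negMulLog p)]
  refine (hentropy.add ((hasDerivAt_id q).const_add p)).congr_deriv ?_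
  rw [logb, log_div (mul_ne_zero two_ne_zero hq) hpq, log_mul two_ne_zero hq]
  field_simp
  ring

lemma strictAntiOn_L_right (p : ℝ) : StrictAntiOn (L p) (Icc 0 p) := by
  refine strictAntiOn_of_deriv_neg (convex_Icc 0 p) (continuous_L_right p).continuousOn ?_
  rw [interior_Icc]
  rintro q ⟨hq, hqp⟩
  have hpq : 0 < p + q := by linarith
  have hlt_one : 2 * q / (p + q) < 1 := by
    rw [div_lt_one hpq]
    linarith
  rw [(hasDerivAt_L_right hq.ne' hpq.ne').deriv]
  exact logb_neg one_lt_two (by positivity) hlt_one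

lemma L_nonneg {p q : ℝ} (hp : 0 ≤ p) (hq : 0 ≤ q) : 0 ≤ L p q := by
  wlog hqp : q ≤ p generalizing p q
  · rw [L_comm]
    exact this hq hp (le_of_not_ge hqp)
  calc
    0 = L p p := (L_self p).symm
    _ ≤ L p q := (strictAntiOn_L_right p).antitoneOn ⟨hq, hqp⟩ ⟨hp, le_rfl⟩ hqp

lemma L_add_L_lt_L_add_L {p q x x' y y' : ℝ} (hx' : 0 ≤ x') (hxx' : x' ≤ x) (hxp : x ≤ p)
    (hy' : 0 ≤ y') (hyy' : y' ≤ y) (hyq : y ≤ q) (h : x' < x ∨ y' < y) :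
    L p x + L q y < L p x' + L q y' := by
  have mx : x ∈ Icc 0 p := ⟨hx'.trans hxx', hxp⟩
  have mx' : x' ∈ Icc 0 p := ⟨hx', hxx'.trans hxp⟩
  have my : y ∈ Icc 0 q := ⟨hy'.trans hyy', hyq⟩
  have my' : y' ∈ Icc 0 q := ⟨hy', hyy'.trans hyq⟩
  have hL := strictAntiOn_L_right
  rcases h with h | h
  · exact add_lt_add_of_lt_of_le (hL p mx' mx h) ((hL q).antitoneOn my' my hyy')
  · exact add_lt_add_of_le_of_lt ((hL p).antitoneOn mx' mx hxx') (hL q my' my h)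

lemma IFV.mu_le_one (a : IFV) : a.mu ≤ 1 := by
  linarith [a.nu_nonneg, a.sum_le]

lemma IFV.ssub.mu_lt_or_nu_lt {a b : IFV} (h : a.ssub b) : a.mu < b.mu ∨ b.nu < a.nu := by
  obtain ⟨⟨hmu, hnu⟩, hne⟩ := h
  by_contra! hge
  exact hne (IFV.ext (hmu.antisymm hge.1) (hge.2.antisymm hnu))

lemma Z_nonneg (a b : IFV) : 0 ≤ Z a b :=
  add_nonneg (L_nonneg (sub_nonneg.2 a.mu_le_one) (sub_nonneg.2 b.mu_le_one))
    (L_nonneg a.nu_nonneg b.nu_nonneg)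

lemma Z_lt_Z_of_sub_of_ssub {a b c : IFV} (hab : a.sub b) (hbc : b.ssub c) : Z a b < Z a c :=
  L_add_L_lt_L_add_L (sub_nonneg.2 c.mu_le_one) (sub_le_sub_left hbc.1.1 1)
    (sub_le_sub_left hab.1 1) c.nu_nonneg hbc.1.2 hab.2
    (hbc.mu_lt_or_nu_lt.imp_left fun h ↦ sub_lt_sub_left h 1)

lemma JS_lt_JS_iff {a b c d : IFV} : JS a b < JS c d ↔ Z a b < Z c d := by
  rw [JS, JS, sqrt_lt_sqrt_iff (div_nonneg (Z_nonneg a b) zero_le_two),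
    div_lt_div_iff_of_pos_right two_pos]

theorem Z_JS_strictMono_of_ssub_chain (a b1 b2 : IFV)
    (h1 : a.ssub b1) (h2 : b1.ssub b2) :
    Z a b1 < Z a b2 ∧ JS a b1 < JS a b2 := by
  have hZ : Z a b1 < Z a b2 := Z_lt_Z_of_sub_of_ssub h1.1 h2
  exact ⟨hZ, JS_lt_JS_iff.2 hZ⟩
end

section
/- Define the entropy E(α) = 1 − JS(α, α^∁) for an intuitionistic fuzzy value α, where α^∁ = ⟨ν_α, μ_α⟩. Then E(α) = 0 if and only if α = ⟨1,0⟩ or α = ⟨0,1⟩. -/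
/-- The complement `α^∁ = ⟨ν_α, μ_α⟩`. -/
def IFV.compl (a : IFV) : IFV :=
  ⟨a.nu, a.mu, a.nu_nonneg, a.mu_nonneg, by linarith [a.sum_le]⟩

/-- The entropy `E(α) = 1 − JS(α, α^∁)`. -/
noncomputable def E (a : IFV) : ℝ := 1 - JS a a.compl

/-!
`L` is positively homogeneous, and on `p + q = 1` it is the deficit of the binary entropy (in bits)
from its maximum `1`. Concavity of the binary entropy therefore gives `L p q ≤ |p - q|`. Hence
`Z α β ≤ |μ_α - μ_β| + |ν_α - ν_β|` with both summands at most `1`, so `JS α β = 1` forces `α` and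
`β` to differ by exactly `1` in each coordinate.
-/

open Real

lemma two_mul_mul_log_two_le_binEntropy {t : ℝ} (ht₀ : 0 ≤ t) (ht : t ≤ 1 / 2) :
    2 * t * log 2 ≤ binEntropy t := by
  have concave : (1 - 2 * t) • binEntropy 0 + (2 * t) • binEntropy 2⁻¹ ≤
      binEntropy ((1 - 2 * t) • (0 : ℝ) + (2 * t) • (2⁻¹ : ℝ)) :=
    strictConcave_binEntropy.concaveOn.2 (by norm_num) (by norm_num) (by linarith) (by linarith)
      (by ring)
  have combination : (1 - 2 * t) • (0 : ℝ) + (2 * t) • (2⁻¹ : ℝ) = t := by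
    simp only [smul_eq_mul]
    ring
  rwa [combination, binEntropy_zero, binEntropy_two_inv, smul_zero, zero_add, smul_eq_mul]
    at concave

lemma one_sub_abs_mul_log_two_le_binEntropy {t : ℝ} (ht₀ : 0 ≤ t) (ht₁ : t ≤ 1) :
    (1 - |t - (1 - t)|) * log 2 ≤ binEntropy t := by
  rcases le_total t (1 - t) with h | h
  · convert two_mul_mul_log_two_le_binEntropy ht₀ (by linarith) using 2
    rw [abs_of_nonpos (by linarith)]
    ring
  · rw [← binEntropy_one_sub]
    convert two_mul_mul_log_two_le_binEntropy (sub_nonneg.2 ht₁) (by linarith) using 2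
    rw [abs_of_nonneg (by linarith)]
    ring

lemma mul_logb_two_two_mul (t : ℝ) : t * logb 2 (2 * t) = t * (1 - log t⁻¹ / log 2) := by
  rcases eq_or_ne t 0 with rfl | ht
  · simp only [zero_mul]
  · rw [logb_mul two_ne_zero ht, logb_self_eq_one one_lt_two, logb, log_inv]
    ring

lemma L_mul_mul (c p q : ℝ) : L (c * p) (c * q) = c * L p q := by
  rcases eq_or_ne c 0 with rfl | hc
  · simp only [L, zero_mul, add_zero]
  · simp only [L, ← mul_add, mul_left_comm 2 c, mul_div_mul_left _ _ hc, mul_assoc]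

lemma L_one_sub (t : ℝ) : L t (1 - t) = 1 - binEntropy t / log 2 := by
  rw [L, add_sub_cancel, div_one, div_one, mul_logb_two_two_mul, mul_logb_two_two_mul, binEntropy]
  ring

lemma L_one_sub_le_abs {t : ℝ} (ht₀ : 0 ≤ t) (ht₁ : t ≤ 1) : L t (1 - t) ≤ |t - (1 - t)| := by
  rw [L_one_sub, sub_le_comm, le_div_iff₀ (log_pos one_lt_two)]
  exact one_sub_abs_mul_log_two_le_binEntropy ht₀ ht₁

lemma L_le_abs_sub {p q : ℝ} (hp : 0 ≤ p) (hq : 0 ≤ q) : L p q ≤ |p - q| := by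
  rcases (add_nonneg hp hq).eq_or_lt with hs | hs
  · obtain ⟨rfl, rfl⟩ := (add_eq_zero_iff_of_nonneg hp hq).1 hs.symm
    simp [L]
  · set t := p / (p + q)
    have hpt : (p + q) * t = p := mul_div_cancel₀ p hs.ne'
    have hqt : (p + q) * (1 - t) = q := by rw [mul_one_sub, hpt, add_sub_cancel_left]
    calc L p q = (p + q) * L t (1 - t) := by rw [← L_mul_mul, hpt, hqt]
      _ ≤ (p + q) * |t - (1 - t)| := by
        gcongr
        exact L_one_sub_le_abs (by positivity) (div_le_one_of_le₀ (by linarith) hs.le)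
      _ = |(p + q) * t - (p + q) * (1 - t)| := by rw [← mul_sub, abs_mul, abs_of_pos hs]
      _ = |p - q| := by rw [hpt, hqt]

namespace IFV

lemma mu_le_one_s10 (a : IFV) : a.mu ≤ 1 := by linarith [a.nu_nonneg, a.sum_le]

lemma nu_le_one (a : IFV) : a.nu ≤ 1 := by linarith [a.mu_nonneg, a.sum_le]

lemma eq_posOne_of_mu_eq_one {a : IFV} (h : a.mu = 1) : a = posOne := by
  have hnu : a.nu = 0 := by linarith [a.sum_le, a.nu_nonneg]
  exact IFV.ext h hnu

lemma eq_negOne_of_nu_eq_one {a : IFV} (h : a.nu = 1) : a = negOne := by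
  have hmu : a.mu = 0 := by linarith [a.sum_le, a.mu_nonneg]
  exact IFV.ext hmu h

lemma eq_posOne_and_eq_negOne_of_mu_sub_eq_one {a b : IFV} (hmu : a.mu - b.mu = 1)
    (hnu : |a.nu - b.nu| = 1) : a = posOne ∧ b = negOne := by
  obtain rfl : a = posOne :=
    eq_posOne_of_mu_eq_one (le_antisymm a.mu_le_one_s10 (by linarith [b.mu_nonneg]))
  rw [show posOne.nu = 0 from rfl, zero_sub, abs_neg, abs_of_nonneg b.nu_nonneg] at hnu
  exact ⟨rfl, eq_negOne_of_nu_eq_one hnu⟩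

end IFV

lemma Z_le_abs_sub_add_abs_sub (a b : IFV) : Z a b ≤ |a.mu - b.mu| + |a.nu - b.nu| := by
  have hmu : L (1 - a.mu) (1 - b.mu) ≤ |a.mu - b.mu| := by
    rw [abs_sub_comm, ← sub_sub_sub_cancel_left a.mu b.mu 1]
    exact L_le_abs_sub (sub_nonneg.2 a.mu_le_one_s10) (sub_nonneg.2 b.mu_le_one_s10)
  exact add_le_add hmu (L_le_abs_sub a.nu_nonneg b.nu_nonneg)

theorem JS_eq_one_iff {a b : IFV} :
    JS a b = 1 ↔ (a = IFV.posOne ∧ b = IFV.negOne) ∨ (a = IFV.negOne ∧ b = IFV.posOne) := by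
  rw [JS, sqrt_eq_one, div_eq_one_iff_eq two_ne_zero]
  constructor
  · intro hZ
    have hsum : 2 ≤ |a.mu - b.mu| + |a.nu - b.nu| := hZ ▸ Z_le_abs_sub_add_abs_sub a b
    have hmu_le : |a.mu - b.mu| ≤ 1 :=
      abs_sub_le_of_nonneg_of_le a.mu_nonneg a.mu_le_one_s10 b.mu_nonneg b.mu_le_one_s10
    have hnu_le : |a.nu - b.nu| ≤ 1 :=
      abs_sub_le_of_nonneg_of_le a.nu_nonneg a.nu_le_one b.nu_nonneg b.nu_le_one
    have hmu : |a.mu - b.mu| = 1 := by linarith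
    have hnu : |a.nu - b.nu| = 1 := by linarith
    rcases eq_or_eq_neg_of_abs_eq hmu with h | h
    · exact .inl (IFV.eq_posOne_and_eq_negOne_of_mu_sub_eq_one h hnu)
    · rw [← neg_eq_iff_eq_neg, neg_sub] at h
      rw [abs_sub_comm] at hnu
      exact .inr (IFV.eq_posOne_and_eq_negOne_of_mu_sub_eq_one h hnu).symm
  · rintro (⟨rfl, rfl⟩ | ⟨rfl, rfl⟩) <;> norm_num [Z, L, IFV.posOne, IFV.negOne]

theorem entropy_eq_zero_iff (a : IFV) :
    E a = 0 ↔ a = IFV.posOne ∨ a = IFV.negOne := by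
  have compl_posOne : IFV.posOne.compl = IFV.negOne := rfl
  have compl_negOne : IFV.negOne.compl = IFV.posOne := rfl
  rw [E, sub_eq_zero, eq_comm, JS_eq_one_iff]
  constructor
  · rintro (⟨h, -⟩ | ⟨h, -⟩)
    exacts [.inl h, .inr h]
  · rintro (rfl | rfl)
    exacts [.inl ⟨rfl, compl_posOne⟩, .inr ⟨rfl, compl_negOne⟩]
end

section
/- Define the entropy E(α) = 1 − JS(α, α^∁) for an intuitionistic fuzzy value α, where α^∁ = ⟨ν_α, μ_α⟩. If intuitionistic fuzzy values α and β satisfy either μ_α ≤ μ_β ≤ ν_β ≤ ν_α or μ_α ≥ μ_β ≥ ν_β ≥ ν_α, then E(α) ≤ E(β). -/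
/-!
Up to the factor `log 2`, `L p q` is the relative entropy of `(p, q)` to its average
`((p + q) / 2, (p + q) / 2)`. By Gibbs' inequality it is therefore the supremum of the linear forms
`(p, q) ↦ p * logb 2 u + q * logb 2 v` over `u, v > 0` with `u + v ≤ 2`, attained for `p, q > 0` at
`u = 2p / (p + q)`, `v = 2q / (p + q)`. If `q ≤ p`, the optimal form has a nonnegative coefficient
at `p` and a nonpositive one at `q`, so spreading `p` and `q` apart increases `L`. Both terms of
`Z α α^∁` are of this kind, for the intervals `[1 - ν, 1 - μ]` and `[μ, ν]` when `μ ≤ ν`; exchanging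
`μ` and `ν` does not change `E`.
-/

open Real Set

lemma mul_log_add_sub_le_mul_log {x t : ℝ} (hx : 0 ≤ x) (ht : 0 < t) :
    x * log t + x - t ≤ x * log x := by
  rcases hx.eq_or_lt with rfl | hx
  · simpa using ht.le
  have log_ratio_le : log t - log x ≤ t / x - 1 := by
    rw [← log_div ht.ne' hx.ne']
    exact log_le_sub_one_of_pos (div_pos ht hx)
  have scaled : x * (log t - log x) ≤ t - x :=
    calc x * (log t - log x) ≤ x * (t / x - 1) := by gcongr
      _ = t - x := by field_simp
  linarith

lemma L_zero_right (p : ℝ) : L p 0 = p := by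
  rcases eq_or_ne p 0 with rfl | hp
  · simp [L]
  · simp [L, hp]

lemma L_mul_log_two (p q : ℝ) :
    L p q * log 2 = p * log (2 * p / (p + q)) + q * log (2 * q / (p + q)) := by
  rw [L, logb, logb]
  field_simp

lemma mul_logb_add_mul_logb_le_L {p q u v : ℝ} (hp : 0 ≤ p) (hq : 0 ≤ q) (hu : 0 < u)
    (hv : 0 < v) (huv : u + v ≤ 2) : p * logb 2 u + q * logb 2 v ≤ L p q := by
  rcases (add_nonneg hp hq).eq_or_lt with hpq | hpq
  · obtain ⟨rfl, rfl⟩ := (add_eq_zero_iff_of_nonneg hp hq).1 hpq.symm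
    simp [L]
  set x := 2 * p / (p + q) with hx
  set y := 2 * q / (p + q) with hy
  have hpx : p = (p + q) / 2 * x := by rw [hx]; field_simp
  have hqy : q = (p + q) / 2 * y := by rw [hy]; field_simp
  have hxy : x + y = 2 := by rw [hx, hy]; field_simp
  have gibbs : x * log u + y * log v ≤ x * log x + y * log y := by
    linarith [mul_log_add_sub_le_mul_log (x := x) (by positivity) hu,
      mul_log_add_sub_le_mul_log (x := y) (by positivity) hv]
  refine le_of_mul_le_mul_right ?_ (log_pos one_lt_two)
  calc (p * logb 2 u + q * logb 2 v) * log 2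
      = p * log u + q * log v := by rw [logb, logb]; field_simp
    _ = (p + q) / 2 * (x * log u + y * log v) := by
        linear_combination log u * hpx + log v * hqy
    _ ≤ (p + q) / 2 * (x * log x + y * log y) := by gcongr
    _ = p * log x + q * log y := by linear_combination -log x * hpx - log y * hqy
    _ = L p q * log 2 := (L_mul_log_two p q).symm

lemma L_le_L_of_Icc_subset {p q p' q' : ℝ} (hq' : 0 ≤ q') (hqp : q ≤ p)
    (h : Icc q p ⊆ Icc q' p') : L p q ≤ L p' q' := by
  obtain ⟨hq'q, hpp'⟩ := (Icc_subset_Icc_iff hqp).1 h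
  rcases (hq'.trans hq'q).eq_or_lt with rfl | hq
  · obtain rfl : q' = 0 := le_antisymm hq'q hq'
    simpa only [L_zero_right] using hpp'
  have hp : 0 < p := hq.trans_le hqp
  have logb_nonneg : 0 ≤ logb 2 (2 * p / (p + q)) :=
    Real.logb_nonneg one_lt_two ((one_le_div (by positivity)).2 (by linarith))
  have logb_nonpos : logb 2 (2 * q / (p + q)) ≤ 0 :=
    Real.logb_nonpos one_lt_two (by positivity) (div_le_one_of_le₀ (by linarith) (by positivity))
  calc L p q = p * logb 2 (2 * p / (p + q)) + q * logb 2 (2 * q / (p + q)) := rfl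
    _ ≤ p' * logb 2 (2 * p / (p + q)) + q' * logb 2 (2 * q / (p + q)) :=
        add_le_add (mul_le_mul_of_nonneg_right hpp' logb_nonneg)
          (mul_le_mul_of_nonpos_right hq'q logb_nonpos)
    _ ≤ L p' q' := mul_logb_add_mul_logb_le_L (hp.le.trans hpp') hq' (by positivity)
        (by positivity) (le_of_eq (by field_simp))

lemma JS_comm (a b : IFV) : JS a b = JS b a := by
  rw [JS, JS, Z, Z, L_comm (1 - a.mu), L_comm a.nu]

lemma E_compl (a : IFV) : E a.compl = E a :=
  congrArg (1 - ·) (JS_comm a.compl a)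

lemma E_le_E_of_Icc_subset {a b : IFV} (hb : b.mu ≤ b.nu)
    (h : Icc b.mu b.nu ⊆ Icc a.mu a.nu) : E a ≤ E b := by
  obtain ⟨hmu, hnu⟩ := (Icc_subset_Icc_iff hb).1 h
  have a_nu_le_one : a.nu ≤ 1 := by linarith [a.mu_nonneg, a.sum_le]
  have membership : L (1 - b.mu) (1 - b.nu) ≤ L (1 - a.mu) (1 - a.nu) :=
    L_le_L_of_Icc_subset (sub_nonneg.2 a_nu_le_one) (sub_le_sub_left hb 1)
      (Icc_subset_Icc (sub_le_sub_left hnu 1) (sub_le_sub_left hmu 1))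
  have nonmembership : L b.nu b.mu ≤ L a.nu a.mu := L_le_L_of_Icc_subset a.mu_nonneg hb h
  have divergence : Z b b.compl ≤ Z a a.compl := add_le_add membership nonmembership
  unfold E JS
  gcongr

theorem entropy_monotone (a b : IFV)
    (h : (a.mu ≤ b.mu ∧ b.mu ≤ b.nu ∧ b.nu ≤ a.nu) ∨
         (a.mu ≥ b.mu ∧ b.mu ≥ b.nu ∧ b.nu ≥ a.nu)) :
    E a ≤ E b := by
  rcases h with ⟨hmu, hb, hnu⟩ | ⟨hmu, hb, hnu⟩
  · exact E_le_E_of_Icc_subset hb (Icc_subset_Icc hmu hnu)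
  · rw [← E_compl a, ← E_compl b]
    exact E_le_E_of_Icc_subset hb (Icc_subset_Icc hnu hmu)
end
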